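/- Let M ∈ ℕ and define Φ⁻¹_M(p) := √2·S_M(2p − 1). If p ∈ [1/2, 1) and y ∈ ℝ satisfies Φ(y) = p, then y ≥ Φ⁻¹_M(p); and if p ∈ (0, 1/2] and y ∈ ℝ satisfies Φ(y) = p, then y ≤ Φ⁻¹_M(p). (The truncated Taylor approximation of the Gaussian quantile function under-estimates it on [1/2,1) and over-estimates it on (0,1/2].) -/

import Mathlib

/-!
Let `G u = ∫₀ᵘ exp (-s²) ds`, let `T z = ∑_{k ≤ M} c_k z^(2k+1) / (2k+1)` and `P = T'`, and let `R`
be the antiderivative of `2 T` with `R 0 = 0`. Since `2 Φ(y) - 1 = (2/√π) G(y/√2)`, the claim for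
`y ≥ 0` is `T (G u) ≤ u` for `u = y/√2`, and the claim for `y ≤ 0` follows by oddness.

The inverse function of `G` solves `x' = exp (x²)`, and the recursion for `c_k` mirrors the equation
`x' = 1 + x' ∫ 2 x`; since all `c_k` are nonnegative, truncation leaves the inequality
`P_{M+1} ≤ 1 + R_M P_M`. By induction `P_M (G u) ≤ exp (u²)` for `u ≥ 0`: integrating this bound
in `u` gives `T_M (G u) ≤ u`, integrating once more gives `R_M (G u) ≤ 1 - exp (-u²)`, and so
`P_{M+1} (G u) ≤ 1 + (1 - exp (-u²)) exp (u²) = exp (u²)`.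
-/

open Finset

/-- The standard normal cumulative distribution function. -/
noncomputable def stdNormalCDF (y : ℝ) : ℝ :=
  ∫ t in Set.Iic y, (1 / Real.sqrt (2 * Real.pi)) * Real.exp (-t ^ 2 / 2)

/-- Maclaurin coefficients of the inverse error function. -/
noncomputable def invErfCoeff : ℕ → ℝ
  | 0 => 1
  | k + 1 => ∑ m ∈ (Finset.range (k + 1)).attach,
      invErfCoeff m.1 * invErfCoeff (k - m.1) / ((m.1 + 1) * (2 * m.1 + 1))
decreasing_by
  · have := Finset.mem_range.mp m.2; omega
  · have := Finset.mem_range.mp m.2; omega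

/-- `S M x = ∑_{k=0}^{M} (c k / (2k+1)) * ((√π/2) * x)^(2k+1)`. -/
noncomputable def invErfPartial (M : ℕ) (x : ℝ) : ℝ :=
  ∑ k ∈ Finset.range (M + 1),
    (invErfCoeff k / (2 * k + 1)) * ((Real.sqrt Real.pi / 2) * x) ^ (2 * k + 1)

/-- Truncated Taylor approximation `Φ⁻¹_M(p) := √2 · S_M(2p − 1)` of the Gaussian
quantile function. -/
noncomputable def gaussQuantileApprox (M : ℕ) (p : ℝ) : ℝ :=
  Real.sqrt 2 * invErfPartial M (2 * p - 1)

open MeasureTheory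

lemma sum_range_cauchyProduct_le {R : Type*} [Semiring R] [PartialOrder R] [IsOrderedRing R]
    {a b : ℕ → R} (ha : ∀ k, 0 ≤ a k) (hb : ∀ k, 0 ≤ b k) (n : ℕ) :
    ∑ k ∈ range n, ∑ m ∈ range (k + 1), a m * b (k - m) ≤
      (∑ k ∈ range n, a k) * ∑ k ∈ range n, b k := by
  rw [sum_range_diag_flip n fun i j => a i * b j, sum_mul_sum]
  gcongr with m
  · exact fun k _ _ => mul_nonneg (ha m) (hb k)
  · exact Nat.sub_le n m

lemma le_of_hasDerivAt_le {f f' g g' : ℝ → ℝ} {a b : ℝ} (hab : a ≤ b)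
    (hf : ∀ x ∈ Set.Icc a b, HasDerivAt f (f' x) x)
    (hg : ∀ x ∈ Set.Icc a b, HasDerivAt g (g' x) x)
    (ha : f a ≤ g a) (hle : ∀ x ∈ Set.Ico a b, f' x ≤ g' x) : f b ≤ g b :=
  image_le_of_deriv_right_le_deriv_boundary
    (fun x hx => (hf x hx).continuousAt.continuousWithinAt)
    (fun x hx => (hf x (Set.Ico_subset_Icc_self hx)).hasDerivWithinAt) ha
    (fun x hx => (hg x hx).continuousAt.continuousWithinAt)
    (fun x hx => (hg x (Set.Ico_subset_Icc_self hx)).hasDerivWithinAt) hle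
    (Set.right_mem_Icc.mpr hab)

lemma integral_gaussian_Iic (b : ℝ) :
    ∫ x in Set.Iic (0 : ℝ), Real.exp (-b * x ^ 2) = √(Real.pi / b) / 2 := by
  have hreflect := integral_comp_neg_Ioi (0 : ℝ) fun x => Real.exp (-b * x ^ 2)
  simp only [neg_zero, neg_sq] at hreflect
  rw [← hreflect, integral_gaussian_Ioi]

lemma invErfCoeff_zero : invErfCoeff 0 = 1 := by
  rw [invErfCoeff]

lemma invErfCoeff_succ (k : ℕ) : invErfCoeff (k + 1) = ∑ m ∈ range (k + 1),
    invErfCoeff m * invErfCoeff (k - m) / (((m : ℝ) + 1) * (2 * m + 1)) := by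
  rw [invErfCoeff]
  exact sum_attach (range (k + 1)) fun m =>
    invErfCoeff m * invErfCoeff (k - m) / (((m : ℝ) + 1) * (2 * m + 1))

lemma invErfCoeff_nonneg (k : ℕ) : 0 ≤ invErfCoeff k := by
  induction k using Nat.strong_induction_on with
  | _ k ih =>
    cases k with
    | zero => exact invErfCoeff_zero ▸ zero_le_one
    | succ k =>
      rw [invErfCoeff_succ]
      refine sum_nonneg fun m hm => div_nonneg (mul_nonneg ?_ ?_) (by positivity)
      · exact ih m (mem_range.mp hm)
      · exact ih (k - m) (Nat.lt_succ_of_le (Nat.sub_le k m))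

/-- The truncated Maclaurin series `T_M` of the inverse function of `gaussPrimitive`; it is
`invErfPartial` without the rescaling of the variable by `√π / 2`. -/
noncomputable def invErfTrunc (M : ℕ) (z : ℝ) : ℝ :=
  ∑ k ∈ range (M + 1), invErfCoeff k / (2 * k + 1) * z ^ (2 * k + 1)

/-- The derivative `P_M` of `invErfTrunc M`. -/
noncomputable def invErfTruncDeriv (M : ℕ) (z : ℝ) : ℝ :=
  ∑ k ∈ range (M + 1), invErfCoeff k * z ^ (2 * k)

/-- The antiderivative `R_M` of `2 * invErfTrunc M` that vanishes at `0`. With the factor `2`, its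
coefficients are the quotients `c_m / ((m+1)(2m+1))` in the recursion for `invErfCoeff`. -/
noncomputable def invErfTruncPrimitive (M : ℕ) (z : ℝ) : ℝ :=
  ∑ k ∈ range (M + 1), invErfCoeff k / ((k + 1) * (2 * k + 1)) * z ^ (2 * (k + 1))

lemma invErfPartial_eq_invErfTrunc (M : ℕ) (x : ℝ) :
    invErfPartial M x = invErfTrunc M (√Real.pi / 2 * x) := rfl

lemma invErfTrunc_zero_right (M : ℕ) : invErfTrunc M 0 = 0 := by
  simp [invErfTrunc]

lemma invErfTruncPrimitive_zero_right (M : ℕ) : invErfTruncPrimitive M 0 = 0 := by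
  simp [invErfTruncPrimitive]

lemma invErfTruncDeriv_zero_left (z : ℝ) : invErfTruncDeriv 0 z = 1 := by
  simp [invErfTruncDeriv, invErfCoeff_zero]

lemma invErfTrunc_neg (M : ℕ) (z : ℝ) : invErfTrunc M (-z) = -invErfTrunc M z := by
  simp only [invErfTrunc, (odd_two_mul_add_one _).neg_pow, mul_neg, sum_neg_distrib]

lemma invErfTruncDeriv_nonneg (M : ℕ) (z : ℝ) : 0 ≤ invErfTruncDeriv M z :=
  sum_nonneg fun k _ => mul_nonneg (invErfCoeff_nonneg k) ((even_two_mul k).pow_nonneg z)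

lemma hasDerivAt_invErfTrunc (M : ℕ) (z : ℝ) :
    HasDerivAt (invErfTrunc M) (invErfTruncDeriv M z) z := by
  refine HasDerivAt.fun_sum fun k _ => ?_
  refine ((hasDerivAt_pow (2 * k + 1) z).const_mul _).congr_deriv ?_
  rw [Nat.add_sub_cancel]
  push_cast
  field_simp

lemma hasDerivAt_invErfTruncPrimitive (M : ℕ) (z : ℝ) :
    HasDerivAt (invErfTruncPrimitive M) (2 * invErfTrunc M z) z := by
  rw [invErfTrunc, mul_sum]
  refine HasDerivAt.fun_sum fun k _ => ?_
  refine ((hasDerivAt_pow (2 * (k + 1)) z).const_mul _).congr_deriv ?_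
  rw [show 2 * (k + 1) - 1 = 2 * k + 1 by lia]
  push_cast
  field_simp

lemma invErfCoeff_succ_mul_pow (k : ℕ) (z : ℝ) :
    invErfCoeff (k + 1) * z ^ (2 * (k + 1)) = ∑ m ∈ range (k + 1),
      (invErfCoeff m / ((m + 1) * (2 * m + 1)) * z ^ (2 * (m + 1))) *
        (invErfCoeff (k - m) * z ^ (2 * (k - m))) := by
  rw [invErfCoeff_succ, sum_mul]
  refine sum_congr rfl fun m hm => ?_
  have hpow : z ^ (2 * (k + 1)) = z ^ (2 * (m + 1)) * z ^ (2 * (k - m)) := by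
    rw [← pow_add]
    have := mem_range.mp hm
    congr 1
    lia
  rw [hpow]
  ring

lemma invErfTruncDeriv_succ_le (M : ℕ) (z : ℝ) :
    invErfTruncDeriv (M + 1) z ≤ 1 + invErfTruncPrimitive M z * invErfTruncDeriv M z := by
  have hpow (k : ℕ) : 0 ≤ z ^ (2 * k) := (even_two_mul k).pow_nonneg z
  rw [invErfTruncDeriv, sum_range_succ', mul_zero, pow_zero, invErfCoeff_zero, mul_one, add_comm]
  simp only [invErfCoeff_succ_mul_pow]
  gcongr 1 + ?_
  exact sum_range_cauchyProduct_le
    (fun k => mul_nonneg (div_nonneg (invErfCoeff_nonneg k) (by positivity)) (hpow (k + 1)))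
    (fun k => mul_nonneg (invErfCoeff_nonneg k) (hpow k)) (M + 1)

/-- The primitive `G u = ∫₀ᵘ exp (-s²) ds`, which is `√π / 2` times the error function. -/
noncomputable def gaussPrimitive (u : ℝ) : ℝ :=
  ∫ s in (0 : ℝ)..u, Real.exp (-s ^ 2)

lemma gaussPrimitive_zero : gaussPrimitive 0 = 0 :=
  intervalIntegral.integral_same

lemma gaussPrimitive_neg (u : ℝ) : gaussPrimitive (-u) = -gaussPrimitive u := by
  have hreflect := intervalIntegral.integral_comp_neg (a := 0) (b := u) fun s => Real.exp (-s ^ 2)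
  simp only [neg_zero, neg_sq] at hreflect
  rw [gaussPrimitive, intervalIntegral.integral_symm, gaussPrimitive, hreflect]

lemma hasDerivAt_gaussPrimitive (u : ℝ) : HasDerivAt gaussPrimitive (Real.exp (-u ^ 2)) u :=
  (Continuous.integral_hasStrictDerivAt (by fun_prop) 0 u).hasDerivAt

lemma gaussPrimitive_strictMono : StrictMono gaussPrimitive :=
  strictMono_of_deriv_pos fun u => (hasDerivAt_gaussPrimitive u).deriv ▸ Real.exp_pos _

lemma invErfTrunc_gaussPrimitive_le_of_deriv_le {M : ℕ}
    (hP : ∀ u, 0 ≤ u → invErfTruncDeriv M (gaussPrimitive u) ≤ Real.exp (u ^ 2))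
    {u : ℝ} (hu : 0 ≤ u) : invErfTrunc M (gaussPrimitive u) ≤ u := by
  refine le_of_hasDerivAt_le (f := fun u => invErfTrunc M (gaussPrimitive u)) (g := id) hu
    (fun x _ => (hasDerivAt_invErfTrunc M _).comp x (hasDerivAt_gaussPrimitive x))
    (fun x _ => hasDerivAt_id x) ?_ fun x hx => ?_
  · simp only [gaussPrimitive_zero, invErfTrunc_zero_right, id_eq, le_refl]
  · calc invErfTruncDeriv M (gaussPrimitive x) * Real.exp (-x ^ 2)
        ≤ Real.exp (x ^ 2) * Real.exp (-x ^ 2) := by gcongr; exact hP x hx.1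
      _ = 1 := by rw [Real.exp_neg, mul_inv_cancel₀ (Real.exp_ne_zero _)]

lemma invErfTruncPrimitive_gaussPrimitive_le_of_le {M : ℕ}
    (hT : ∀ u, 0 ≤ u → invErfTrunc M (gaussPrimitive u) ≤ u) {u : ℝ} (hu : 0 ≤ u) :
    invErfTruncPrimitive M (gaussPrimitive u) ≤ 1 - Real.exp (-u ^ 2) := by
  have hderiv (x : ℝ) :
      HasDerivAt (fun u : ℝ => 1 - Real.exp (-u ^ 2)) (2 * x * Real.exp (-x ^ 2)) x :=
    (((hasDerivAt_pow 2 x).fun_neg.exp).const_sub 1).congr_deriv (by norm_num; ring)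
  refine le_of_hasDerivAt_le (f := fun u => invErfTruncPrimitive M (gaussPrimitive u)) hu
    (fun x _ => (hasDerivAt_invErfTruncPrimitive M _).comp x (hasDerivAt_gaussPrimitive x))
    (fun x _ => hderiv x) ?_ fun x hx => ?_
  · simp [gaussPrimitive_zero, invErfTruncPrimitive_zero_right]
  · gcongr
    exact hT x hx.1

lemma invErfTruncDeriv_gaussPrimitive_le (M : ℕ) {u : ℝ} (hu : 0 ≤ u) :
    invErfTruncDeriv M (gaussPrimitive u) ≤ Real.exp (u ^ 2) := by
  induction M generalizing u with
  | zero => exact invErfTruncDeriv_zero_left _ ▸ Real.one_le_exp (sq_nonneg u)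
  | succ M ih =>
    have hT (v : ℝ) (hv : 0 ≤ v) : invErfTrunc M (gaussPrimitive v) ≤ v :=
      invErfTrunc_gaussPrimitive_le_of_deriv_le (fun _ => ih) hv
    have hexp : Real.exp (-u ^ 2) ≤ 1 := Real.exp_le_one_iff.mpr (neg_nonpos.mpr (sq_nonneg u))
    calc invErfTruncDeriv (M + 1) (gaussPrimitive u)
        ≤ 1 + invErfTruncPrimitive M (gaussPrimitive u) * invErfTruncDeriv M (gaussPrimitive u) :=
          invErfTruncDeriv_succ_le M _
      _ ≤ 1 + (1 - Real.exp (-u ^ 2)) * Real.exp (u ^ 2) := by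
          gcongr 1 + ?_
          exact mul_le_mul (invErfTruncPrimitive_gaussPrimitive_le_of_le hT hu) (ih hu)
            (invErfTruncDeriv_nonneg M _) (sub_nonneg.mpr hexp)
      _ = Real.exp (u ^ 2) := by
          rw [Real.exp_neg, sub_mul, inv_mul_cancel₀ (Real.exp_ne_zero _)]
          ring

lemma invErfTrunc_gaussPrimitive_le (M : ℕ) {u : ℝ} (hu : 0 ≤ u) :
    invErfTrunc M (gaussPrimitive u) ≤ u :=
  invErfTrunc_gaussPrimitive_le_of_deriv_le (fun _ => invErfTruncDeriv_gaussPrimitive_le M) hu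

lemma integral_exp_neg_sq_div_two (y : ℝ) :
    ∫ t in (0 : ℝ)..y, Real.exp (-t ^ 2 / 2) = √2 * gaussPrimitive (y / √2) := by
  rw [gaussPrimitive]
  have hscale := intervalIntegral.integral_comp_div (a := 0) (b := y)
    (fun s => Real.exp (-s ^ 2)) (Real.sqrt_ne_zero'.mpr two_pos)
  simpa only [div_pow, Real.sq_sqrt zero_le_two, zero_div, smul_eq_mul, ← neg_div] using hscale

lemma stdNormalCDF_eq (y : ℝ) :
    stdNormalCDF y = 1 / 2 + gaussPrimitive (y / √2) / √Real.pi := by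
  have hexp (t : ℝ) : Real.exp (-t ^ 2 / 2) = Real.exp (-(1 / 2) * t ^ 2) := by ring_nf
  have hint : Integrable fun t : ℝ => Real.exp (-t ^ 2 / 2) := by
    simpa only [hexp] using integrable_exp_neg_mul_sq (b := 1 / 2) (by norm_num)
  have hhalf : ∫ t in Set.Iic (0 : ℝ), Real.exp (-t ^ 2 / 2) = √(2 * Real.pi) / 2 := by
    simp only [hexp, integral_gaussian_Iic]
    ring_nf
  have hsplit : ∫ t in Set.Iic y, Real.exp (-t ^ 2 / 2) =
      √(2 * Real.pi) / 2 + √2 * gaussPrimitive (y / √2) := by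
    rw [← hhalf, ← integral_exp_neg_sq_div_two,
      ← intervalIntegral.integral_Iic_sub_Iic hint.integrableOn hint.integrableOn]
    ring
  have hpi : √Real.pi ≠ 0 := Real.sqrt_ne_zero'.mpr Real.pi_pos
  rw [stdNormalCDF, integral_const_mul, hsplit, Real.sqrt_mul zero_le_two]
  field_simp

lemma stdNormalCDF_zero : stdNormalCDF 0 = 1 / 2 := by
  rw [stdNormalCDF_eq, zero_div, gaussPrimitive_zero, zero_div, add_zero]

lemma stdNormalCDF_neg (y : ℝ) : stdNormalCDF (-y) = 1 - stdNormalCDF y := by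
  rw [stdNormalCDF_eq, stdNormalCDF_eq, neg_div, gaussPrimitive_neg]
  ring

lemma stdNormalCDF_strictMono : StrictMono stdNormalCDF := by
  intro y z hyz
  rw [stdNormalCDF_eq, stdNormalCDF_eq]
  gcongr
  exact gaussPrimitive_strictMono (by gcongr)

lemma gaussQuantileApprox_one_sub (M : ℕ) (p : ℝ) :
    gaussQuantileApprox M (1 - p) = -gaussQuantileApprox M p := by
  have hreflect : 2 * (1 - p) - 1 = -(2 * p - 1) := by ring
  rw [gaussQuantileApprox, gaussQuantileApprox, hreflect, invErfPartial_eq_invErfTrunc,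
    invErfPartial_eq_invErfTrunc, mul_neg, invErfTrunc_neg, mul_neg]

lemma gaussQuantileApprox_stdNormalCDF (M : ℕ) (y : ℝ) :
    gaussQuantileApprox M (stdNormalCDF y) = √2 * invErfTrunc M (gaussPrimitive (y / √2)) := by
  have hpi : √Real.pi ≠ 0 := Real.sqrt_ne_zero'.mpr Real.pi_pos
  have hG : gaussPrimitive (y / √2) = √Real.pi / 2 * (2 * stdNormalCDF y - 1) := by
    rw [stdNormalCDF_eq]
    field_simp
    ring
  rw [gaussQuantileApprox, invErfPartial_eq_invErfTrunc, hG]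

lemma gaussQuantileApprox_stdNormalCDF_le (M : ℕ) {y : ℝ} (hy : 0 ≤ y) :
    gaussQuantileApprox M (stdNormalCDF y) ≤ y :=
  calc gaussQuantileApprox M (stdNormalCDF y)
      = √2 * invErfTrunc M (gaussPrimitive (y / √2)) := gaussQuantileApprox_stdNormalCDF M y
    _ ≤ √2 * (y / √2) := by gcongr; exact invErfTrunc_gaussPrimitive_le M (by positivity)
    _ = y := mul_div_cancel₀ y (Real.sqrt_ne_zero'.mpr two_pos)

lemma le_gaussQuantileApprox_stdNormalCDF (M : ℕ) {y : ℝ} (hy : y ≤ 0) :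
    y ≤ gaussQuantileApprox M (stdNormalCDF y) := by
  have hneg := gaussQuantileApprox_stdNormalCDF_le M (neg_nonneg.mpr hy)
  rwa [stdNormalCDF_neg, gaussQuantileApprox_one_sub, neg_le_neg_iff] at hneg

/-- The truncated Taylor approximation of the Gaussian quantile function
under-estimates it on `[1/2, 1)` and over-estimates it on `(0, 1/2]`. -/
theorem gaussQuantileApprox_bounds (M : ℕ) (p y : ℝ) :
    (1 / 2 ≤ p → p < 1 → stdNormalCDF y = p → gaussQuantileApprox M p ≤ y) ∧
    (0 < p → p ≤ 1 / 2 → stdNormalCDF y = p → y ≤ gaussQuantileApprox M p) := by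
  constructor
  · rintro hp - rfl
    rw [← stdNormalCDF_zero, stdNormalCDF_strictMono.le_iff_le] at hp
    exact gaussQuantileApprox_stdNormalCDF_le M hp
  · rintro - hp rfl
    rw [← stdNormalCDF_zero, stdNormalCDF_strictMono.le_iff_le] at hp
    exact le_gaussQuantileApprox_stdNormalCDF M hp
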